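/- arXiv:2209.07927 — 3 statements merged into one kernel-verified Lean document; each statement's English description precedes it below -/
import Mathlib

section
/- Let q be a prime power, let σ be a partition, let τ̃ be a partition such that every part of τ̃ is greater than 1 if q = 2, and let ε > 0. Then for all sufficiently large n the following holds: setting τ = (n − |σ| − |τ̃|, τ̃_1, τ̃_2, …), there exists a nonempty (σ,τ)-transitive subset Y of GL(n,q) satisfying |Y|/|GL(n,q)| < ε. -/
open Module

/-- The linear automorphism of `F_q^n` induced by `g ∈ GL(n,q)`. -/
def glMap (F : Type) [Field F] {n : ℕ} (g : GL (Fin n) F) : (Fin n → F) →ₗ[F] (Fin n → F) :=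
  Matrix.mulVecLin (g : Matrix (Fin n) (Fin n) F)

/-- An element `α = (ρ, I)` of `Σ_{n,q}`: a composition `ρ` of `n` together with a set `I` of
indices of parts of `ρ`, where for `q = 2` every part not indexed by `I` must exceed `1`. -/
structure SigmaNQ (q n : ℕ) where
  ρ : Composition n
  I : Finset (Fin ρ.length)
  two : q = 2 → ∀ i ∉ I, 1 < ρ.blocksFun i

/-- The first component `σ` of the type of `α = (ρ,I)`: the multiset of parts `ρ_i` with
`i ∈ I` (a partition, recorded as an unordered multiset of parts). -/
def SigmaNQ.typeSigma {q n : ℕ} (α : SigmaNQ q n) : Multiset ℕ :=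
  α.I.val.map α.ρ.blocksFun

/-- The second component `τ` of the type of `α = (ρ,I)`: the multiset of parts `ρ_i` with
`i ∉ I` (a partition, recorded as an unordered multiset of parts). -/
def SigmaNQ.typeTau {q n : ℕ} (α : SigmaNQ q n) : Multiset ℕ :=
  α.Iᶜ.val.map α.ρ.blocksFun

/-- An `α`-flag for `α = (ρ,I) ∈ Σ_{n,q}`: a `ρ`-flag `{0} = V_0 ≤ V_1 ≤ ⋯ ≤ V_k = F_q^n`
with `dim(V_i/V_{i−1}) = ρ_i`, together with, for each `i ∈ I`, an ordered basis of the
quotient `V_i/V_{i−1}`, recorded by a tuple of `ρ_i` representatives in `V_i` whose classes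
modulo `V_{i−1}` are linearly independent (hence a basis of `V_i/V_{i−1}`). -/
structure AlphaFlag (F : Type) [Field F] {q n : ℕ} (α : SigmaNQ q n) where
  V : Fin (α.ρ.length + 1) → Submodule F (Fin n → F)
  mono : Monotone V
  bot_eq : V 0 = ⊥
  top_eq : V (Fin.last α.ρ.length) = ⊤
  dim : ∀ i : Fin α.ρ.length,
    finrank F (V i.succ) = finrank F (V i.castSucc) + α.ρ.blocksFun i
  B : ∀ i : Fin α.ρ.length, i ∈ α.I → Fin (α.ρ.blocksFun i) → (Fin n → F)
  B_mem : ∀ i hi m, B i hi m ∈ V i.succ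
  B_indep : ∀ i hi,
    LinearIndependent F (fun m => (V i.castSucc).mkQ (B i hi m))

/-- `g ∈ GL(n,q)` maps the `α`-flag `A` to the `α`-flag `C`: it maps the subspaces of `A`
to those of `C`, and the basis representatives of `A` to representatives of the same classes
as those of `C` (i.e. `g` maps the induced bases of the quotients to each other). -/
def MapsAlphaFlag (F : Type) [Field F] {q n : ℕ} {α : SigmaNQ q n} (g : GL (Fin n) F)
    (A C : AlphaFlag F α) : Prop :=
  (∀ j, Submodule.map (glMap F g) (A.V j) = C.V j) ∧
  (∀ i hi m, glMap F g (A.B i hi m) - C.B i hi m ∈ C.V i.castSucc)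

/-- A subset `Y` of `GL(n,q)` is transitive on `α`-flags: there is a constant `r` such that
for all `α`-flags `A`, `C` there are exactly `r` elements `g ∈ Y` mapping `A` to `C`. -/
def TransitiveOnAlphaFlags (F : Type) [Field F] [Fintype F] {q n : ℕ} (Y : Set (GL (Fin n) F))
    (α : SigmaNQ q n) : Prop :=
  ∃ r : ℕ, ∀ A C : AlphaFlag F α,
    Nat.card {g : GL (Fin n) F // g ∈ Y ∧ MapsAlphaFlag F g A C} = r

/-- `(σ,τ) ∈ Θ_{n,q}`: `σ` and `τ` are partitions (multisets of positive parts) with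
`|σ| + |τ| = n` such that, if `q = 2`, every part of `τ` is greater than `1`. -/
def InTheta (q n : ℕ) (σ τ : Multiset ℕ) : Prop :=
  (∀ p ∈ σ, 0 < p) ∧ (∀ p ∈ τ, 0 < p) ∧ σ.sum + τ.sum = n ∧ (q = 2 → ∀ p ∈ τ, 1 < p)

/-- `Y ⊆ GL(n,q)` is `(σ,τ)`-transitive if it is transitive on `α`-flags for some
`α ∈ Σ_{n,q}` of type `(σ,τ)`. -/
def STTransitive (F : Type) [Field F] [Fintype F] (q n : ℕ) (Y : Set (GL (Fin n) F))
    (σ τ : Multiset ℕ) : Prop :=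
  ∃ α : SigmaNQ q n, α.typeSigma = σ ∧ α.typeTau = τ ∧ TransitiveOnAlphaFlags F Y α

/-- A colouring `h` of the linear automorphisms of `V` by an additive group `Γ` is `s`-balanced if
for every subspace `U` of dimension less than `s`, every translation of the colours is induced by
an injective self-map of the automorphisms which does not change their restrictions to `U`. -/
def IsBalancedColouring (F : Type) [Field F] {V Γ : Type} [AddCommGroup V] [Module F V]
    [AddCommGroup Γ] (s : ℕ) (h : (V ≃ₗ[F] V) → Γ) : Prop :=
  ∀ U : Submodule F V, finrank F U < s → ∀ γ : Γ, ∃ φ : (V ≃ₗ[F] V) → (V ≃ₗ[F] V),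
    Function.Injective φ ∧ (∀ g, ∀ x ∈ U, φ g x = g x) ∧ ∀ g, h (φ g) = γ + h g

section Blocks

variable {F : Type} [Field F] {V W : Type} [AddCommGroup V] [Module F V] [AddCommGroup W]
  [Module F W]

theorem exists_eq_skewProd [FiniteDimensional F V] [FiniteDimensional F W]
    (p : (V × W) ≃ₗ[F] (V × W)) (hp : ∀ y, (p (0, y)).1 = 0) :
    ∃ (d : V ≃ₗ[F] V) (a : W ≃ₗ[F] W) (b : V →ₗ[F] W), p = d.skewProd a b := by
  let a : W →ₗ[F] W := LinearMap.snd F V W ∘ₗ p.toLinearMap ∘ₗ LinearMap.inr F V W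
  let d : V →ₗ[F] V := LinearMap.fst F V W ∘ₗ p.toLinearMap ∘ₗ LinearMap.inl F V W
  let b : V →ₗ[F] W := LinearMap.snd F V W ∘ₗ p.toLinearMap ∘ₗ LinearMap.inl F V W
  have hsum : ∀ x y, p (x, y) = p (x, 0) + p (0, y) := fun x y => by
    rw [← map_add]; simp
  have ha : Function.Injective a := by
    rw [injective_iff_map_eq_zero]
    intro y hy
    have : p (0, y) = 0 := Prod.ext (hp y) hy
    simpa using congrArg Prod.snd ((map_eq_zero_iff p p.injective).1 this)
  have hd : Function.Injective d := by
    rw [LinearMap.injective_iff_surjective]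
    intro x
    refine ⟨(p.symm (x, 0)).1, ?_⟩
    have h1 := hsum (p.symm (x, 0)).1 (p.symm (x, 0)).2
    have h2 := congrArg Prod.fst h1
    simpa [hp, d] using h2.symm
  refine ⟨LinearEquiv.ofInjectiveEndo d hd, LinearEquiv.ofInjectiveEndo a ha, b, ?_⟩
  ext ⟨x, y⟩
  · rw [hsum]
    simp [hp, d]
  · rw [hsum]
    simp [a, b, add_comm]

theorem skewProd_inj {d d' : V ≃ₗ[F] V} {a a' : W ≃ₗ[F] W} {b b' : V →ₗ[F] W}
    (h : d.skewProd a b = d'.skewProd a' b') : d = d' ∧ a = a' ∧ b = b' := by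
  refine ⟨?_, ?_, ?_⟩
  · ext x
    simpa using congrArg Prod.fst (LinearEquiv.congr_fun h (x, 0))
  · ext y
    simpa using congrArg Prod.snd (LinearEquiv.congr_fun h (0, y))
  · ext x
    simpa using congrArg Prod.snd (LinearEquiv.congr_fun h (x, 0))

variable (F V W) in
/-- Coset representatives of the stabiliser of `0 × W` and the block entries of the elements of
this stabiliser parametrise the automorphisms of `V × W`. -/
theorem exists_bijective_skewProd [FiniteDimensional F V] [FiniteDimensional F W] :
    ∃ (Q : Type) (X : Q → ((V × W) ≃ₗ[F] (V × W))), Function.Bijective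
      fun t : Q × (V ≃ₗ[F] V) × (W ≃ₗ[F] W) × (V →ₗ[F] W) =>
        (t.2.1.skewProd t.2.2.1 t.2.2.2).trans (X t.1) := by
  let κ : ((V × W) ≃ₗ[F] (V × W)) → Submodule F (V × W) := fun g =>
    (LinearMap.range (LinearMap.inr F V W)).map g.toLinearMap
  have hκ : ∀ (g p : (V × W) ≃ₗ[F] (V × W)), κ (p.trans g) = (κ p).map g.toLinearMap := by
    intro g p
    simp only [κ, ← Submodule.map_comp]
    rfl
  have hskew : ∀ (d : V ≃ₗ[F] V) (a : W ≃ₗ[F] W) (b : V →ₗ[F] W),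
      κ (d.skewProd a b) = LinearMap.range (LinearMap.inr F V W) := by
    intro d a b
    ext ⟨x, y⟩
    simp only [κ, Submodule.mem_map, LinearMap.mem_range]
    constructor
    · rintro ⟨_, ⟨w, rfl⟩, h⟩
      refine ⟨a w, ?_⟩
      simpa using h
    · rintro ⟨w, h⟩
      refine ⟨_, ⟨a.symm w, rfl⟩, ?_⟩
      simpa using h
  choose X hX using fun S : Set.range κ => S.2
  refine ⟨Set.range κ, X, ?_, ?_⟩
  · rintro ⟨S, d, a, b⟩ ⟨S', d', a', b'⟩ h
    have hS : S = S' := by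
      have h1 := congrArg κ h
      simp only [hκ, hskew] at h1
      exact Subtype.ext ((hX S).symm.trans (h1.trans (hX S')))
    subst hS
    have h2 : d.skewProd a b = d'.skewProd a' b' := by
      ext1 z
      exact (X S).injective (LinearEquiv.congr_fun h z)
    obtain ⟨rfl, rfl, rfl⟩ := skewProd_inj h2
    rfl
  · intro g
    let S : Set.range κ := ⟨κ g, g, rfl⟩
    obtain ⟨d, a, b, h⟩ := exists_eq_skewProd (g.trans (X S).symm) (by
      intro y
      have h1 : g (0, y) ∈ κ (X S) := by
        rw [hX S]
        exact ⟨(0, y), ⟨y, rfl⟩, rfl⟩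
      obtain ⟨_, ⟨w, rfl⟩, hw⟩ := h1
      have : (X S).symm (g (0, y)) = (0, w) := by
        rw [LinearEquiv.symm_apply_eq, ← hw]
        rfl
      simp [this])
    refine ⟨(S, d, a, b), ?_⟩
    simp only [← h]
    ext1 z
    simp

/-- Dimension formula for the fibration of a subspace of `V × W` over its projection to `V`,
together with a linear map parametrising the subspace over this projection. -/
theorem exists_graph_of_submodule_prod [FiniteDimensional F V] [FiniteDimensional F W]
    (U : Submodule F (V × W)) :
    ∃ (U₁ : Submodule F V) (U₂ : Submodule F W) (c : V →ₗ[F] W),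
      finrank F U = finrank F U₁ + finrank F U₂ ∧
      ∀ z ∈ U, z.1 ∈ U₁ ∧ z.2 - c z.1 ∈ U₂ := by
  let f : U →ₗ[F] V := LinearMap.fst F V W ∘ₗ U.subtype
  obtain ⟨σ, hσ⟩ := f.rangeRestrict.exists_rightInverse_of_surjective f.range_rangeRestrict
  obtain ⟨c, hc⟩ := LinearMap.exists_extend (LinearMap.snd F V W ∘ₗ U.subtype ∘ₗ σ)
  let e : LinearMap.ker f →ₗ[F] W := LinearMap.snd F V W ∘ₗ U.subtype ∘ₗ (LinearMap.ker f).subtype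
  have he : Function.Injective e := by
    rw [injective_iff_map_eq_zero]
    rintro ⟨⟨⟨x, y⟩, hz⟩, hx⟩ hy
    have hx' : x = 0 := hx
    have hy' : y = 0 := hy
    subst hx' hy'
    rfl
  refine ⟨LinearMap.range f, LinearMap.range e, c, ?_, ?_⟩
  · rw [LinearMap.finrank_range_of_inj he]
    exact (f.finrank_range_add_finrank_ker).symm
  · intro z hz
    refine ⟨⟨⟨z, hz⟩, rfl⟩, ?_⟩
    have h1 := LinearMap.congr_fun hc (f.rangeRestrict ⟨z, hz⟩)
    have h2 := congrArg Subtype.val (LinearMap.congr_fun hσ (f.rangeRestrict ⟨z, hz⟩))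
    refine ⟨⟨⟨z, hz⟩ - σ (f.rangeRestrict ⟨z, hz⟩), ?_⟩, ?_⟩
    · rw [LinearMap.mem_ker, map_sub, sub_eq_zero]
      exact h2.symm
    · have h3 : c z.1 = ((σ (f.rangeRestrict ⟨z, hz⟩) : U) : V × W).2 := h1
      rw [h3]
      rfl

variable {Γ : Type} [AddCommGroup Γ]

theorem IsBalancedColouring.prod [FiniteDimensional F V] [FiniteDimensional F W]
    {s₁ s₂ : ℕ} {h₁ : (V ≃ₗ[F] V) → Γ} {h₂ : (W ≃ₗ[F] W) → Γ}
    (H₁ : IsBalancedColouring F s₁ h₁) (H₂ : IsBalancedColouring F s₂ h₂) :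
    ∃ h : ((V × W) ≃ₗ[F] (V × W)) → Γ, IsBalancedColouring F (s₁ + s₂) h := by
  obtain ⟨Q, X, hbij⟩ := exists_bijective_skewProd F V W
  let Ψ := Equiv.ofBijective _ hbij
  refine ⟨fun g => h₁ (Ψ.symm g).2.1 + h₂ (Ψ.symm g).2.2.1, ?_⟩
  intro U hU γ
  obtain ⟨U₁, U₂, c, hdim, hmem⟩ := exists_graph_of_submodule_prod U
  obtain ⟨φ₁, φ₂, hφ₁, hφ₂, hU₁, hU₂, hγ⟩ :
      ∃ (φ₁ : (V ≃ₗ[F] V) → (V ≃ₗ[F] V)) (φ₂ : (W ≃ₗ[F] W) → (W ≃ₗ[F] W)),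
        Function.Injective φ₁ ∧ Function.Injective φ₂ ∧ (∀ g, ∀ x ∈ U₁, φ₁ g x = g x) ∧
        (∀ g, ∀ x ∈ U₂, φ₂ g x = g x) ∧ ∀ d a, h₁ (φ₁ d) + h₂ (φ₂ a) = γ + (h₁ d + h₂ a) := by
    rcases lt_or_ge (finrank F U₁) s₁ with hlt | hge
    · obtain ⟨φ, i, hφ, e⟩ := H₁ U₁ hlt γ
      exact ⟨φ, id, i, Function.injective_id, hφ, fun _ _ _ => rfl,
        fun d a => by rw [e, add_assoc]; rfl⟩
    · obtain ⟨φ, i, hφ, e⟩ := H₂ U₂ (by omega) γ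
      exact ⟨id, φ, Function.injective_id, i, fun _ _ _ => rfl, hφ,
        fun d a => by rw [e, add_left_comm]; rfl⟩
  let θ : Q × (V ≃ₗ[F] V) × (W ≃ₗ[F] W) × (V →ₗ[F] W) →
      Q × (V ≃ₗ[F] V) × (W ≃ₗ[F] W) × (V →ₗ[F] W) := fun t =>
    (t.1, φ₁ t.2.1, φ₂ t.2.2.1,
      t.2.2.2 + t.2.2.1.toLinearMap ∘ₗ c - (φ₂ t.2.2.1).toLinearMap ∘ₗ c)
  have hθ : Function.Injective θ := by
    rintro ⟨q, d, a, b⟩ ⟨q', d', a', b'⟩ h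
    simp only [θ, Prod.mk.injEq] at h
    obtain ⟨rfl, hd, ha, hb⟩ := h
    obtain rfl := hφ₁ hd
    obtain rfl := hφ₂ ha
    simpa using hb
  refine ⟨Ψ ∘ θ ∘ Ψ.symm, Ψ.injective.comp (hθ.comp Ψ.symm.injective), ?_, ?_⟩
  · intro g z hz
    obtain ⟨t, rfl⟩ := Ψ.surjective g
    obtain ⟨q, d, a, b⟩ := t
    obtain ⟨hz₁, hz₂⟩ := hmem z hz
    simp only [Function.comp_apply, Equiv.symm_apply_apply]
    simp only [Ψ, Equiv.ofBijective_apply, θ, LinearEquiv.trans_apply]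
    congr 1
    have h3 := hU₂ a _ hz₂
    simp only [map_sub] at h3
    rw [LinearEquiv.skewProd_apply, LinearEquiv.skewProd_apply, hU₁ d _ hz₁]
    refine Prod.ext rfl ?_
    simp only [LinearMap.sub_apply, LinearMap.add_apply, LinearMap.comp_apply,
      LinearEquiv.coe_coe]
    rw [sub_eq_iff_eq_add.1 h3]
    abel
  · intro g
    simp only [Function.comp_apply, Equiv.symm_apply_apply]
    exact hγ _ _

theorem IsBalancedColouring.congr {s : ℕ} {h : (V ≃ₗ[F] V) → Γ} (H : IsBalancedColouring F s h)
    (e : V ≃ₗ[F] W) : ∃ h' : (W ≃ₗ[F] W) → Γ, IsBalancedColouring F s h' := by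
  refine ⟨fun g => h ((e.trans g).trans e.symm), fun U hU γ => ?_⟩
  obtain ⟨φ, hi, hφ, hγ⟩ := H (U.map e.symm.toLinearMap) (by
    rwa [LinearEquiv.finrank_map_eq e.symm U]) γ
  refine ⟨fun g => (e.symm.trans (φ ((e.trans g).trans e.symm))).trans e, ?_, ?_, ?_⟩
  · intro g g' hg
    have h1 : φ ((e.trans g).trans e.symm) = φ ((e.trans g').trans e.symm) := by
      ext x
      simpa using LinearEquiv.congr_fun hg (e x)
    ext y
    simpa using LinearEquiv.congr_fun (hi h1) (e.symm y)
  · intro g x hx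
    simp [hφ ((e.trans g).trans e.symm) (e.symm x) ⟨x, hx, rfl⟩]
  · intro g
    rw [← hγ]
    refine congrArg h ?_
    ext x
    simp

variable (F V W) in
/-- The off-diagonal block is a `1`-balanced colouring. -/
theorem exists_isBalancedColouring_one [FiniteDimensional F V] [FiniteDimensional F W] :
    ∃ h : ((V × W) ≃ₗ[F] (V × W)) → (V →ₗ[F] W), IsBalancedColouring F 1 h := by
  obtain ⟨Q, X, hbij⟩ := exists_bijective_skewProd F V W
  let Ψ := Equiv.ofBijective _ hbij
  refine ⟨fun g => (Ψ.symm g).2.2.2, fun U hU γ => ?_⟩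
  let θ : Q × (V ≃ₗ[F] V) × (W ≃ₗ[F] W) × (V →ₗ[F] W) →
      Q × (V ≃ₗ[F] V) × (W ≃ₗ[F] W) × (V →ₗ[F] W) := fun t =>
    (t.1, t.2.1, t.2.2.1, γ + t.2.2.2)
  have hθ : Function.Injective θ := by
    rintro ⟨q, d, a, b⟩ ⟨q', d', a', b'⟩ h
    simpa [θ] using h
  refine ⟨Ψ ∘ θ ∘ Ψ.symm, Ψ.injective.comp (hθ.comp Ψ.symm.injective), ?_, ?_⟩
  · intro g x hx
    rw [Nat.lt_one_iff, Submodule.finrank_eq_zero] at hU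
    rw [hU, Submodule.mem_bot] at hx
    simp [hx]
  · intro g
    simp [θ]

end Blocks

theorem exists_isBalancedColouring (F : Type) [Field F] (k s n : ℕ) (hn : s * (1 + k) ≤ n) :
    ∃ h : ((Fin n → F) ≃ₗ[F] (Fin n → F)) → (F →ₗ[F] (Fin k → F)),
      IsBalancedColouring F s h := by
  induction s generalizing n with
  | zero => exact ⟨fun _ => 0, fun U hU => absurd hU (Nat.not_lt_zero _)⟩
  | succ s ih =>
    obtain ⟨h₁, H₁⟩ := exists_isBalancedColouring_one F F (Fin k → F)
    rw [Nat.succ_mul] at hn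
    obtain ⟨h₂, H₂⟩ := ih (n - (1 + k)) (by omega)
    obtain ⟨h, H⟩ := H₂.prod H₁
    refine H.congr (LinearEquiv.ofFinrankEq _ _ ?_)
    simp
    omega

/-- The colour classes of a balanced colouring are equally frequent among the automorphisms with
a property that depends only on the restriction to a subspace of small dimension. -/
theorem IsBalancedColouring.card_mul_card {F V Γ : Type} [Field F] [AddCommGroup V] [Module F V]
    [AddCommGroup Γ] [Fintype Γ] [Finite (V ≃ₗ[F] V)] {s : ℕ} {h : (V ≃ₗ[F] V) → Γ}
    (H : IsBalancedColouring F s h) (U : Submodule F V) (hU : finrank F U < s)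
    (P : (V ≃ₗ[F] V) → Prop) (hP : ∀ g g' : V ≃ₗ[F] V, (∀ x ∈ U, g x = g' x) → P g → P g') :
    Nat.card {g // P g} = Fintype.card Γ * Nat.card {g // h g = 0 ∧ P g} := by
  have hle : ∀ γ δ, Nat.card {g // h g = δ ∧ P g} ≤ Nat.card {g // h g = γ + δ ∧ P g} := by
    intro γ δ
    obtain ⟨φ, hi, hφ, hγ⟩ := H U hU γ
    refine Nat.card_le_card_of_injective
      (fun g => ⟨φ g.1, by rw [hγ, g.2.1], hP _ _ (fun x hx => (hφ _ x hx).symm) g.2.2⟩) ?_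
    intro g g' hg
    exact Subtype.ext (hi (congrArg Subtype.val hg))
  have heq : ∀ γ, Nat.card {g // h g = γ ∧ P g} = Nat.card {g // h g = 0 ∧ P g} := fun γ =>
    le_antisymm (by simpa using hle (-γ) γ) (by simpa using hle γ 0)
  let e : {g // P g} ≃ Σ γ : Γ, {g // h g = γ ∧ P g} :=
    { toFun := fun g => ⟨h g.1, g.1, rfl, g.2⟩
      invFun := fun g => ⟨g.2.1, g.2.2.2⟩
      left_inv := fun _ => rfl
      right_inv := by rintro ⟨_, g, rfl, hg⟩; rfl }
  rw [Nat.card_congr e, Nat.card_sigma, Finset.sum_congr rfl fun γ _ => heq γ]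
  simp

section Flags

variable {F : Type} [Field F] {q n : ℕ} {α : SigmaNQ q n}

/-- A family of vectors adapted to the flag `A` and its bases. -/
theorem AlphaFlag.exists_adapted_family (A : AlphaFlag F α) :
    ∃ b : (Σ i : Fin α.ρ.length, Fin (α.ρ.blocksFun i)) → (Fin n → F),
      (∀ j, A.V j = Submodule.span F (b '' {x | x.1.castSucc < j})) ∧
      ∀ i hi m, b ⟨i, m⟩ = A.B i hi m := by
  have hle : ∀ i : Fin α.ρ.length, A.V i.castSucc ≤ A.V i.succ := fun i =>
    A.mono i.castSucc_lt_succ.le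
  have hlayer : ∀ i : Fin α.ρ.length, ∃ v : Fin (α.ρ.blocksFun i) → (Fin n → F),
      (∀ m, v m ∈ A.V i.succ) ∧ LinearIndependent F (fun m => (A.V i.castSucc).mkQ (v m)) ∧
      ∀ hi, v = A.B i hi := by
    intro i
    by_cases hi : i ∈ α.I
    · exact ⟨A.B i hi, A.B_mem i hi, A.B_indep i hi, fun _ => rfl⟩
    · let f : A.V i.succ →ₗ[F] ((Fin n → F) ⧸ A.V i.castSucc) :=
        (A.V i.castSucc).mkQ ∘ₗ (A.V i.succ).subtype
      have hker : finrank F (LinearMap.ker f) = finrank F (A.V i.castSucc) := by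
        have : LinearMap.ker f = (A.V i.castSucc).comap (A.V i.succ).subtype := by
          simp [f, LinearMap.ker_comp]
        rw [this]
        exact (Submodule.comapSubtypeEquivOfLe (hle i)).finrank_eq
      have hrange : finrank F (LinearMap.range f) = α.ρ.blocksFun i := by
        have h1 := f.finrank_range_add_finrank_ker
        rw [hker, A.dim i] at h1
        omega
      let β := finBasisOfFinrankEq F (LinearMap.range f) hrange
      choose v hv using fun m => (β m).2
      refine ⟨fun m => v m, fun m => (v m).2, ?_, fun h => absurd h hi⟩
      have h2 : (fun m => (A.V i.castSucc).mkQ (v m)) = (LinearMap.range f).subtype ∘ β :=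
        funext hv
      rw [h2]
      exact β.linearIndependent.map' _ (Submodule.ker_subtype _)
  choose v hmem hind hB using hlayer
  refine ⟨fun x => v x.1 x.2, ?_, fun i hi m => congrFun (hB i hi) m⟩
  intro j
  induction j using Fin.induction with
  | zero => simp [A.bot_eq]
  | succ i ih =>
    have himage : (fun x : (Σ i : Fin α.ρ.length, Fin (α.ρ.blocksFun i)) => v x.1 x.2) ''
        {x | x.1.castSucc < i.succ} =
        (fun x : (Σ i : Fin α.ρ.length, Fin (α.ρ.blocksFun i)) => v x.1 x.2) ''
          {x | x.1.castSucc < i.castSucc} ∪ Set.range (v i) := by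
      ext y
      simp only [Set.mem_image, Set.mem_ofPred_eq, Set.mem_union, Set.mem_range, Sigma.exists,
        Fin.castSucc_lt_succ_iff, Fin.castSucc_lt_castSucc_iff]
      constructor
      · rintro ⟨a, m, ha, rfl⟩
        rcases ha.lt_or_eq with h | rfl
        · exact Or.inl ⟨a, m, h, rfl⟩
        · exact Or.inr ⟨m, rfl⟩
      · rintro (⟨a, m, h, rfl⟩ | ⟨m, rfl⟩)
        · exact ⟨a, m, h.le, rfl⟩
        · exact ⟨i, m, le_rfl, rfl⟩
    rw [himage, Submodule.span_union, ← ih]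
    symm
    refine Submodule.eq_of_le_of_finrank_le (sup_le (hle i) ?_) ?_
    · rw [Submodule.span_le]
      rintro _ ⟨m, rfl⟩
      exact hmem i m
    · have hdisj : Disjoint (Submodule.span F (Set.range (v i))) (A.V i.castSucc) := by
        have := Submodule.range_ker_disjoint (hind i)
        rwa [Submodule.ker_mkQ] at this
      have hcard : finrank F (Submodule.span F (Set.range (v i))) = α.ρ.blocksFun i := by
        rw [finrank_span_eq_card (LinearIndependent.of_comp _ (hind i)), Fintype.card_fin]
      have hsum := Submodule.finrank_sup_add_finrank_inf_eq (A.V i.castSucc)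
        (Submodule.span F (Set.range (v i)))
      rw [hdisj.symm.eq_bot, finrank_bot, hcard] at hsum
      rw [A.dim i]
      omega

/-- The linear automorphism `g` maps the flag `A` to the flag `C`. -/
def EquivMapsAlphaFlag (g : (Fin n → F) ≃ₗ[F] (Fin n → F)) (A C : AlphaFlag F α) : Prop :=
  (∀ j, (A.V j).map g.toLinearMap = C.V j) ∧
  (∀ i hi m, g (A.B i hi m) - C.B i hi m ∈ C.V i.castSucc)

theorem exists_equivMapsAlphaFlag (A C : AlphaFlag F α) :
    ∃ g, EquivMapsAlphaFlag g A C := by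
  have hbasis : ∀ A : AlphaFlag F α,
      ∃ b : Basis (Σ i : Fin α.ρ.length, Fin (α.ρ.blocksFun i)) F (Fin n → F),
      (∀ j, A.V j = Submodule.span F (b '' {x | x.1.castSucc < j})) ∧
      ∀ i hi m, b ⟨i, m⟩ = A.B i hi m := by
    intro A
    obtain ⟨b, hb, hB⟩ := A.exists_adapted_family
    have hspan : ⊤ ≤ Submodule.span F (Set.range b) := by
      rw [← A.top_eq, hb]
      exact Submodule.span_mono (Set.image_subset_range _ _)
    have hli : LinearIndependent F b :=
      linearIndependent_of_top_le_span_of_card_eq_finrank hspan (by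
        simp [α.ρ.sum_blocksFun])
    exact ⟨Basis.mk hli hspan, by simpa using hb, by simpa using hB⟩
  obtain ⟨a, ha, hA⟩ := hbasis A
  obtain ⟨c, hc, hC⟩ := hbasis C
  refine ⟨a.equiv c (Equiv.refl _), fun j => ?_, fun i hi m => ?_⟩
  · rw [ha, hc, Submodule.map_span, Set.image_image]
    simp
  · rw [← hA, ← hC]
    simp

theorem EquivMapsAlphaFlag.trans {g h : (Fin n → F) ≃ₗ[F] (Fin n → F)} {A C D : AlphaFlag F α}
    (hg : EquivMapsAlphaFlag g A C) (hh : EquivMapsAlphaFlag h C D) :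
    EquivMapsAlphaFlag (g.trans h) A D := by
  refine ⟨fun j => ?_, fun i hi m => ?_⟩
  · rw [← hh.1 j, ← hg.1 j, ← Submodule.map_comp]
    rfl
  · have h1 : h (g (A.B i hi m) - C.B i hi m) ∈ D.V i.castSucc := by
      rw [← hh.1]
      exact ⟨_, hg.2 i hi m, rfl⟩
    have h2 := add_mem h1 (hh.2 i hi m)
    rw [map_sub, sub_add_sub_cancel] at h2
    exact h2

theorem EquivMapsAlphaFlag.symm {g : (Fin n → F) ≃ₗ[F] (Fin n → F)} {A C : AlphaFlag F α}
    (hg : EquivMapsAlphaFlag g A C) : EquivMapsAlphaFlag g.symm C A := by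
  have h : ∀ j, (C.V j).map g.symm.toLinearMap = A.V j := fun j => by
    rw [← hg.1 j, ← Submodule.map_comp]
    simp
  refine ⟨h, fun i hi m => ?_⟩
  rw [← h, ← neg_mem_iff]
  exact ⟨_, hg.2 i hi m, by simp⟩

/-- The number of automorphisms mapping one flag to another does not depend on the flags. -/
theorem card_equivMapsAlphaFlag_eq [Finite F] (A C A' C' : AlphaFlag F α) :
    Nat.card {g // EquivMapsAlphaFlag g A C} = Nat.card {g // EquivMapsAlphaFlag g A' C'} := by
  have hle : ∀ A C A' C' : AlphaFlag F α,
      Nat.card {g // EquivMapsAlphaFlag g A C} ≤ Nat.card {g // EquivMapsAlphaFlag g A' C'} := by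
    intro A C A' C'
    obtain ⟨k, hk⟩ := exists_equivMapsAlphaFlag A' A
    obtain ⟨l, hl⟩ := exists_equivMapsAlphaFlag C C'
    have : Finite ((Fin n → F) ≃ₗ[F] (Fin n → F)) := DFunLike.finite _
    refine Nat.card_le_card_of_injective
      (fun g => ⟨(k.trans g.1).trans l, (hk.trans g.2).trans hl⟩) fun g g' h => Subtype.ext ?_
    ext1 x
    have h1 := LinearEquiv.congr_fun (congrArg Subtype.val h) (k.symm x)
    simpa using h1
  exact le_antisymm (hle _ _ _ _) (hle _ _ _ _)

/-- If the last part is not equipped with a basis, then mapping one flag to another is a property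
of the restriction to the last proper subspace. -/
theorem EquivMapsAlphaFlag.of_eqOn {l : Fin α.ρ.length} (hl : l.succ = Fin.last _) (hlI : l ∉ α.I)
    {A C : AlphaFlag F α} {g g' : (Fin n → F) ≃ₗ[F] (Fin n → F)}
    (h : ∀ x ∈ A.V l.castSucc, g x = g' x) (hg : EquivMapsAlphaFlag g A C) :
    EquivMapsAlphaFlag g' A C := by
  have hlast : ∀ j : Fin (α.ρ.length + 1), j = Fin.last _ ∨ j ≤ l.castSucc := by
    intro j
    rw [Fin.ext_iff, Fin.le_def]
    have h1 := congrArg Fin.val hl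
    have h2 := j.2
    simp at h1 ⊢
    omega
  refine ⟨fun j => ?_, fun i hi m => ?_⟩
  · rcases hlast j with rfl | hj
    · rw [A.top_eq, C.top_eq, Submodule.map_top, LinearEquiv.range]
    · rw [← hg.1 j]
      ext y
      constructor
      · rintro ⟨x, hx, rfl⟩
        exact ⟨x, hx, h x (A.mono hj hx)⟩
      · rintro ⟨x, hx, rfl⟩
        exact ⟨x, hx, (h x (A.mono hj hx)).symm⟩
  · have hi' : i.succ ≤ l.castSucc := by
      rcases hlast i.succ with h' | h'
      · exact absurd hi (Fin.succ_injective _ (h'.trans hl.symm) ▸ hlI)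
      · exact h'
    rw [← h _ (A.mono hi' (A.B_mem i hi m))]
    exact hg.2 i hi m

/-- The matrices in `GL(n,q)` as linear automorphisms of `F_q^n`. -/
noncomputable def glEquiv (F : Type) [Field F] (n : ℕ) :
    GL (Fin n) F ≃ ((Fin n → F) ≃ₗ[F] (Fin n → F)) :=
  (Matrix.GeneralLinearGroup.toLin.trans
    (LinearMap.GeneralLinearGroup.generalLinearEquiv F (Fin n → F))).toEquiv

theorem glEquiv_toLinearMap (g : GL (Fin n) F) : (glEquiv F n g).toLinearMap = glMap F g := by
  ext
  rfl

theorem mapsAlphaFlag_iff (g : GL (Fin n) F) (A C : AlphaFlag F α) :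
    MapsAlphaFlag F g A C ↔ EquivMapsAlphaFlag (glEquiv F n g) A C := by
  unfold MapsAlphaFlag EquivMapsAlphaFlag
  rw [← glEquiv_toLinearMap]
  rfl

theorem IsBalancedColouring.transitiveOnAlphaFlags [Fintype F] {Γ : Type} [AddCommGroup Γ]
    [Fintype Γ] {s : ℕ} {h : ((Fin n → F) ≃ₗ[F] (Fin n → F)) → Γ}
    (H : IsBalancedColouring F s h) {l : Fin α.ρ.length} (hl : l.succ = Fin.last _)
    (hlI : l ∉ α.I) (hs : n < s + α.ρ.blocksFun l) :
    TransitiveOnAlphaFlags F {g : GL (Fin n) F | h (glEquiv F n g) = 0} α := by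
  have : Finite ((Fin n → F) ≃ₗ[F] (Fin n → F)) := DFunLike.finite _
  have hcount : ∀ A C : AlphaFlag F α, Nat.card {g // EquivMapsAlphaFlag g A C} =
      Fintype.card Γ *
        Nat.card {g : GL (Fin n) F // g ∈ {g | h (glEquiv F n g) = 0} ∧ MapsAlphaFlag F g A C} := by
    intro A C
    have hdim : finrank F (A.V l.castSucc) < s := by
      have h1 := A.dim l
      rw [hl, A.top_eq, finrank_top, finrank_fin_fun] at h1
      omega
    rw [H.card_mul_card _ hdim (EquivMapsAlphaFlag · A C) fun g g' hgg' =>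
      EquivMapsAlphaFlag.of_eqOn hl hlI hgg']
    congr 1
    refine (Nat.card_congr ((glEquiv F n).subtypeEquiv fun g => ?_)).symm
    rw [mapsAlphaFlag_iff]
    rfl
  rcases isEmpty_or_nonempty (AlphaFlag F α) with hE | ⟨⟨A₀⟩⟩
  · exact ⟨0, fun A => hE.elim A⟩
  · refine ⟨Nat.card {g : GL (Fin n) F // g ∈ {g | h (glEquiv F n g) = 0} ∧
      MapsAlphaFlag F g A₀ A₀}, fun A C => ?_⟩
    have h1 := card_equivMapsAlphaFlag_eq A C A₀ A₀
    rw [hcount, hcount] at h1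
    exact Nat.eq_of_mul_eq_mul_left Fintype.card_pos h1

end Flags

theorem map_get_filter_lt_length_append (L₁ L₂ : List ℕ) :
    ((Finset.univ.filter fun i : Fin (L₁ ++ L₂).length => i.1 < L₁.length).val.map
      (L₁ ++ L₂).get) = (L₁ : Multiset ℕ) := by
  let e : Fin L₁.length ↪ Fin (L₁ ++ L₂).length := Fin.castLEEmb (by simp)
  have he : (Finset.univ.filter fun i : Fin (L₁ ++ L₂).length => i.1 < L₁.length) =
      Finset.univ.map e := by
    ext i
    simp only [Finset.mem_filter, Finset.mem_univ, true_and, Finset.mem_map]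
    constructor
    · exact fun hi => ⟨⟨i, hi⟩, Fin.ext rfl⟩
    · rintro ⟨j, rfl⟩
      exact j.2
  rw [he, Finset.map_val, Multiset.map_map]
  have hcomp : (L₁ ++ L₂).get ∘ e = L₁.get := by
    ext i
    simp [e, List.getElem_append_left]
  rw [hcomp, Fin.univ_val_map, List.ofFn_get]

theorem map_get_filter_lt_length_append_compl (L₁ L₂ : List ℕ) :
    ((Finset.univ.filter fun i : Fin (L₁ ++ L₂).length => i.1 < L₁.length)ᶜ.val.map
      (L₁ ++ L₂).get) = (L₂ : Multiset ℕ) := by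
  set I := Finset.univ.filter fun i : Fin (L₁ ++ L₂).length => i.1 < L₁.length with hI
  have h1 : I.val + Iᶜ.val = Finset.univ.val := by
    rw [← Finset.disjUnion_val I Iᶜ disjoint_compl_right, Finset.disjUnion_eq_union,
      Finset.union_compl]
  have h2 : (I.val + Iᶜ.val).map (L₁ ++ L₂).get = (L₁ : Multiset ℕ) + L₂ := by
    rw [h1, Fin.univ_val_map, List.ofFn_get, Multiset.coe_add]
  rw [Multiset.map_add, map_get_filter_lt_length_append] at h2
  exact add_left_cancel h2

/-- Compositions of a prescribed type whose last part is a prescribed part not equipped with a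
basis. -/
theorem exists_sigmaNQ_last (q n m : ℕ) (σ τ : Multiset ℕ) (hθ : InTheta q n σ (m ::ₘ τ)) :
    ∃ (α : SigmaNQ q n) (l : Fin α.ρ.length), α.typeSigma = σ ∧ α.typeTau = m ::ₘ τ ∧
      l.succ = Fin.last _ ∧ l ∉ α.I ∧ α.ρ.blocksFun l = m := by
  obtain ⟨hσ, hτ, hsum, h2⟩ := hθ
  let L₁ := σ.toList
  let L₂ := τ.toList ++ [m]
  have hL₁ : (L₁ : Multiset ℕ) = σ := σ.coe_toList
  have hL₂ : (L₂ : Multiset ℕ) = m ::ₘ τ := by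
    rw [← Multiset.coe_add, Multiset.coe_toList, Multiset.coe_singleton, add_comm,
      Multiset.singleton_add]
  have hmem₁ : ∀ p, p ∈ L₁ ↔ p ∈ σ := fun p => by rw [← hL₁, Multiset.mem_coe]
  have hmem₂ : ∀ p, p ∈ L₂ ↔ p ∈ m ::ₘ τ := fun p => by rw [← hL₂, Multiset.mem_coe]
  let ρ : Composition n :=
    { blocks := L₁ ++ L₂
      blocks_pos := by
        intro p hp
        rw [List.mem_append, hmem₁, hmem₂] at hp
        exact hp.elim (hσ p) (hτ p)
      blocks_sum := by
        rw [List.sum_append, ← Multiset.sum_coe, ← Multiset.sum_coe, hL₁, hL₂, hsum] }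
  let I : Finset (Fin ρ.length) :=
    Finset.univ.filter fun i : Fin (L₁ ++ L₂).length => i.1 < L₁.length
  have hS : I.val.map ρ.blocksFun = σ :=
    (map_get_filter_lt_length_append L₁ L₂).trans hL₁
  have hT : Iᶜ.val.map ρ.blocksFun = m ::ₘ τ :=
    (map_get_filter_lt_length_append_compl L₁ L₂).trans hL₂
  have hlen : ρ.length = L₁.length + (τ.toList.length + 1) := by
    simp [Composition.length, ρ, L₂]
  refine ⟨⟨ρ, I, fun hq i hi => h2 hq _ ?_⟩, ⟨L₁.length + τ.toList.length, ?_⟩, hS, hT, ?_, ?_, ?_⟩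
  · rw [← hT]
    exact Multiset.mem_map_of_mem _ (Finset.mem_compl.2 hi)
  · change _ < ρ.length
    omega
  · ext
    change L₁.length + τ.toList.length + 1 = ρ.length
    omega
  · simp [I]
  · change (L₁ ++ (τ.toList ++ [m])).get _ = m
    simp

/-- For a fixed partition `σ`, a fixed partition `τ̃` (with all parts `> 1` if `q = 2`) and
`ε > 0`, for all sufficiently large `n` there is a nonempty `(σ,τ)`-transitive subset `Y` of
`GL(n,q)` with `|Y|/|GL(n,q)| < ε`, where `τ = (n − |σ| − |τ̃|, τ̃_1, τ̃_2, …)`. -/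
theorem statement7 (q : ℕ) (hq : IsPrimePow q) (F : Type) [Field F] [Fintype F]
    (hF : Fintype.card F = q)
    (σ : Multiset ℕ) (hσ : ∀ p ∈ σ, 0 < p)
    (τt : Multiset ℕ) (hτt : ∀ p ∈ τt, 0 < p) (hτt2 : q = 2 → ∀ p ∈ τt, 1 < p)
    (ε : ℝ) (hε : 0 < ε) :
    ∃ N : ℕ, ∀ n, N ≤ n → ∃ Y : Set (GL (Fin n) F), Y.Nonempty ∧
      STTransitive F q n Y σ ((n - σ.sum - τt.sum) ::ₘ τt) ∧
      (Nat.card Y : ℝ) < ε * (Nat.card (GL (Fin n) F) : ℝ) := by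
  obtain ⟨k, hk⟩ := exists_nat_gt (1 / ε)
  let t := σ.sum + τt.sum
  refine ⟨(t + 1) * (1 + k) + t + 2, fun n hn => ?_⟩
  have hθ : InTheta q n σ ((n - σ.sum - τt.sum) ::ₘ τt) := by
    have ht : t = σ.sum + τt.sum := rfl
    refine ⟨hσ, ?_, ?_, fun h2 => ?_⟩
    · rw [Multiset.forall_mem_cons]
      exact ⟨by omega, hτt⟩
    · rw [Multiset.sum_cons]
      omega
    · rw [Multiset.forall_mem_cons]
      exact ⟨by omega, hτt2 h2⟩
  obtain ⟨α, l, hασ, hατ, hl, hlI, hlm⟩ := exists_sigmaNQ_last q n _ σ τt hθ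
  obtain ⟨h, H⟩ := exists_isBalancedColouring F k (t + 1) n (by omega)
  have : Finite (F →ₗ[F] (Fin k → F)) := DFunLike.finite _
  have := Fintype.ofFinite (F →ₗ[F] (Fin k → F))
  have : Finite ((Fin n → F) ≃ₗ[F] (Fin n → F)) := DFunLike.finite _
  have hcard := H.card_mul_card ⊥ (by simp) (fun _ => True) (fun _ _ _ _ => trivial)
  have hΓ : k < Fintype.card (F →ₗ[F] (Fin k → F)) := by
    rw [Module.card_eq_pow_finrank (K := F), finrank_linearMap]
    simpa using Nat.lt_pow_self (hF ▸ hq.one_lt : 1 < Fintype.card F)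
  let Y : Set (GL (Fin n) F) := {g | h (glEquiv F n g) = 0}
  have hY : Nat.card (GL (Fin n) F) =
      Fintype.card (F →ₗ[F] (Fin k → F)) * Nat.card Y := by
    rw [Nat.card_congr (glEquiv F n),
      ← Nat.card_congr (Equiv.subtypeUnivEquiv fun g => trivial :
        {g : (Fin n → F) ≃ₗ[F] (Fin n → F) // True} ≃ _), hcard]
    congr 1
    exact (Nat.card_congr ((glEquiv F n).subtypeEquiv fun g => by simp [Y])).symm
  have hYpos : 0 < Nat.card Y :=
    Nat.pos_of_ne_zero fun h0 => Nat.card_pos.ne' (by rw [hY, h0, mul_zero])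
  refine ⟨Y, ?_, ⟨α, hασ, hατ, H.transitiveOnAlphaFlags hl hlI ?_⟩, ?_⟩
  · obtain ⟨⟨g⟩, -⟩ := Nat.card_pos_iff.1 hYpos
    exact ⟨g.1, g.2⟩
  · rw [hlm]
    omega
  · rw [hY]
    push_cast
    have h1 : 1 < ε * (Fintype.card (F →ₗ[F] (Fin k → F)) : ℝ) := by
      rw [div_lt_iff₀ hε] at hk
      have : (k : ℝ) < Fintype.card (F →ₗ[F] (Fin k → F)) := by exact_mod_cast hΓ
      nlinarith
    have h2 : (0 : ℝ) < Nat.card Y := by exact_mod_cast hYpos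
    nlinarith
end

section
/- Let q be a prime power and let n and i be integers with 0 ≤ i ≤ n. Then the number of elements g ∈ GL(n,q) with dim ker(g − id) = i (equivalently, with rank(g − id) = n − i) equals (|GL(n,q)|/|GL(i,q)|) · Σ_{k=0}^{n−i} (−1)^k q^{C(k,2)} / (q^{k·i} · |GL(k,q)|), where |GL(m,q)| = ∏_{j=0}^{m−1}(q^m − q^j) (so |GL(0,q)| = 1) and C(k,2) = k(k−1)/2. -/
/-- `|GL(m,q)| = ∏_{j=0}^{m−1} (q^m − q^j)` (so `cardGL q 0 = 1`). -/
def cardGL (q m : ℕ) : ℕ := ∏ j ∈ Finset.range m, (q ^ m - q ^ j)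

open Finset

/-- Partial sums of the alternating `q`-binomial series, as polynomials in `x = q ^ m`. -/
lemma sum_alternating_prod_sub_pow (q x : ℝ) (hq : 1 < q) (K : ℕ) :
    ∑ k ∈ range (K + 1), (-1) ^ k * q ^ k.choose 2 / (∏ j ∈ range k, (q ^ k - q ^ j)) *
        ∏ j ∈ range k, (x - q ^ j) =
      (-1) ^ K * q ^ K.choose 2 / (∏ j ∈ range K, (q ^ K - q ^ j)) *
        ∏ j ∈ range K, (x - q ^ (j + 1)) := by
  have hc (k : ℕ) : ∏ j ∈ range k, (q ^ k - q ^ j) ≠ 0 :=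
    prod_ne_zero_iff.2 fun j hj =>
      (sub_pos.2 (pow_lt_pow_right₀ hq (mem_range.1 hj))).ne'
  induction K with
  | zero => simp
  | succ K ih =>
    have hs : ∏ j ∈ range (K + 1), (q ^ (K + 1) - q ^ j) =
        (q ^ (K + 1) - 1) * (q ^ K * ∏ j ∈ range K, (q ^ K - q ^ j)) := by
      have h : ∏ j ∈ range K, (q ^ (K + 1) - q ^ (j + 1)) =
          q ^ K * ∏ j ∈ range K, (q ^ K - q ^ j) := by
        nth_rw 3 [← card_range K]
        rw [← prod_const, ← prod_mul_distrib]
        exact prod_congr rfl fun j _ => by ring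
      rw [prod_range_succ', h]
      ring
    have hP : ∏ j ∈ range (K + 1), (x - q ^ j) =
        (x - 1) * ∏ j ∈ range K, (x - q ^ (j + 1)) := by
      rw [prod_range_succ']
      ring
    have h1 : q ^ (K + 1) - 1 ≠ 0 := (sub_pos.2 (one_lt_pow₀ hq K.succ_ne_zero)).ne'
    have hq0 : q ≠ 0 := by positivity
    have hch : (K + 1).choose 2 = K.choose 2 + K := by
      rw [Nat.choose_succ_succ' K 1, Nat.choose_one_right, add_comm]
    rw [sum_range_succ, ih, hs, hP, hch, prod_range_succ _ K]
    have := hc K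
    field_simp
    ring

lemma prod_pow_sub_pow_eq_zero (q : ℝ) {r k : ℕ} (h : r < k) :
    ∏ j ∈ range k, (q ^ r - q ^ j) = 0 :=
  prod_eq_zero (mem_range.2 h) (sub_self _)

lemma sum_alternating_prod_pow_sub_pow (q : ℝ) (hq : 1 < q) {i K r : ℕ} (h : r ≤ i + K) :
    ∑ k ∈ range (K + 1),
        (-1) ^ k * q ^ k.choose 2 / (q ^ (k * i) * ∏ j ∈ range k, (q ^ k - q ^ j)) *
          ∏ j ∈ range (i + k), (q ^ r - q ^ j) =
      if r = i then ∏ j ∈ range i, (q ^ i - q ^ j) else 0 := by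
  obtain hr | hr := lt_or_ge r i
  · rw [if_neg hr.ne]
    exact sum_eq_zero fun k _ => by
      rw [prod_pow_sub_pow_eq_zero q (Nat.lt_add_right k hr), mul_zero]
  obtain ⟨m, rfl⟩ := Nat.exists_eq_add_of_le hr
  have hq0 : q ≠ 0 := by positivity
  have hsplit (k : ℕ) : ∏ j ∈ range (i + k), (q ^ (i + m) - q ^ j) =
      (∏ j ∈ range i, (q ^ (i + m) - q ^ j)) *
        (q ^ (k * i) * ∏ j ∈ range k, (q ^ m - q ^ j)) := by
    have h : ∏ j ∈ range k, (q ^ (i + m) - q ^ (i + j)) =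
        q ^ (k * i) * ∏ j ∈ range k, (q ^ m - q ^ j) := by
      rw [mul_comm k i, pow_mul]
      nth_rw 2 [← card_range k]
      rw [← prod_const, ← prod_mul_distrib]
      exact prod_congr rfl fun j _ => by ring
    rw [prod_range_add, h]
  have hterm (k : ℕ) :
      (-1) ^ k * q ^ k.choose 2 / (q ^ (k * i) * ∏ j ∈ range k, (q ^ k - q ^ j)) *
          ∏ j ∈ range (i + k), (q ^ (i + m) - q ^ j) =
        (∏ j ∈ range i, (q ^ (i + m) - q ^ j)) *
          ((-1) ^ k * q ^ k.choose 2 / (∏ j ∈ range k, (q ^ k - q ^ j)) *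
            ∏ j ∈ range k, (q ^ m - q ^ j)) := by
    rw [hsplit, mul_comm (q ^ (k * i)) (∏ j ∈ range k, (q ^ k - q ^ j)), ← div_div]
    have := pow_ne_zero (k * i) hq0
    field_simp
  simp_rw [hterm]
  rw [← mul_sum, sum_alternating_prod_sub_pow q _ hq]
  obtain rfl | hm := Nat.eq_zero_or_pos m
  · have h0 : (-1) ^ K * q ^ K.choose 2 / (∏ j ∈ range K, (q ^ K - q ^ j)) *
        ∏ j ∈ range K, (q ^ 0 - q ^ (j + 1)) = 1 := by
      rw [← sum_alternating_prod_sub_pow q _ hq, sum_range_succ']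
      rw [sum_eq_zero fun k _ => by rw [prod_pow_sub_pow_eq_zero q k.succ_pos, mul_zero]]
      simp
    rw [h0]
    simp
  · have h0 : ∏ j ∈ range K, (q ^ m - q ^ (j + 1)) = 0 :=
      prod_eq_zero (mem_range.2 (by omega : m - 1 < K))
        (by rw [Nat.sub_add_cancel hm, sub_self])
    rw [h0, if_neg (by omega), mul_zero, mul_zero]

section LinearIndependentTuples

variable {F V : Type*} [Field F] [AddCommGroup V] [Module F V]

lemma exists_linearEquiv_apply_eq_of_linearIndependent {ι : Type*} [Finite ι] {s t : ι → V}
    (hs : LinearIndependent F s) (ht : LinearIndependent F t) :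
    ∃ g : V ≃ₗ[F] V, ∀ a, g (s a) = t a := by
  have : FiniteDimensional F (Submodule.span F (Set.range s)) :=
    .span_of_finite F (Set.finite_range _)
  obtain ⟨g, hg⟩ := Submodule.exists_linearEquiv_restrict_eq
    (hs.linearCombinationEquiv.symm ≪≫ₗ ht.linearCombinationEquiv)
  refine ⟨g, fun a => ?_⟩
  have h : (hs.linearCombinationEquiv (Finsupp.single a 1) : V) = s a := by simp
  rw [← h, ← hg]
  simp

variable (F V) in
/-- The linearly independent `k`-tuples of vectors, with the action of the linear automorphisms. -/
def linearIndependentTuples (k : ℕ) : SubMulAction (V ≃ₗ[F] V) (Fin k → V) where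
  carrier := {s | LinearIndependent F s}
  smul_mem' g _ hs := hs.map' (g : V →ₗ[F] V) g.ker

/-- A tuple fixed by `g` is a tuple of vectors in the kernel of `g - id`. -/
def fixedByLinearIndependentTuplesEquiv (k : ℕ) (g : V ≃ₗ[F] V) :
    MulAction.fixedBy (linearIndependentTuples F V k) g ≃
      {s : Fin k → LinearMap.ker ((g : V →ₗ[F] V) - LinearMap.id) // LinearIndependent F s} where
  toFun s := ⟨fun a => ⟨s.1.1 a, sub_eq_zero.2 (congrFun (congrArg Subtype.val s.2) a)⟩,
    LinearIndependent.of_comp (Submodule.subtype _) s.1.2⟩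
  invFun s := ⟨⟨fun a => s.1 a, s.2.map' (Submodule.subtype _) (Submodule.ker_subtype _)⟩,
    Subtype.ext (funext fun a => sub_eq_zero.1 (s.1 a).2)⟩
  left_inv _ := rfl
  right_inv _ := rfl

variable [Fintype F] [Finite V]

lemma natCast_card_linearIndependent (k : ℕ) :
    (Nat.card {s : Fin k → V // LinearIndependent F s} : ℝ) =
      ∏ j ∈ range k, ((Fintype.card F : ℝ) ^ Module.finrank F V - (Fintype.card F : ℝ) ^ j) := by
  obtain h | h := le_or_gt k (Module.finrank F V)
  · rw [card_linearIndependent h, Nat.cast_prod, ← Fin.prod_univ_eq_prod_range]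
    refine prod_congr rfl fun j _ => ?_
    rw [Nat.cast_sub (Nat.pow_le_pow_right Fintype.card_pos (j.2.le.trans h))]
    simp
  · rw [prod_pow_sub_pow_eq_zero _ h, Nat.cast_eq_zero, Nat.card_eq_zero]
    refine .inl ⟨fun s => h.not_ge ?_⟩
    simpa using s.2.fintype_card_le_finrank

/-- Burnside's lemma for the transitive action of the linear automorphisms on the linearly
independent `k`-tuples. -/
lemma sum_prod_pow_finrank_ker_sub_pow [Fintype (V ≃ₗ[F] V)] {k : ℕ}
    (hk : k ≤ Module.finrank F V) :
    ∑ g : V ≃ₗ[F] V, ∏ j ∈ range k,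
        ((Fintype.card F : ℝ) ^ Module.finrank F (LinearMap.ker ((g : V →ₗ[F] V) - LinearMap.id))
          - (Fintype.card F : ℝ) ^ j) = Nat.card (V ≃ₗ[F] V) := by
  classical
  let X := linearIndependentTuples F V k
  have : Finite X := inferInstanceAs (Finite {s : Fin k → V // LinearIndependent F s})
  have := Fintype.ofFinite X
  have := Fintype.ofFinite (MulAction.orbitRel.Quotient (V ≃ₗ[F] V) X)
  have hpre : MulAction.IsPretransitive (V ≃ₗ[F] V) X := ⟨fun s t => by
    obtain ⟨g, hg⟩ := exists_linearEquiv_apply_eq_of_linearIndependent s.2 t.2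
    exact ⟨g, Subtype.ext (funext hg)⟩⟩
  have hne : Nonempty X :=
    let b := Module.finBasis F V
    ⟨⟨b ∘ Fin.castLE hk, b.linearIndependent.comp _ (Fin.castLE_injective hk)⟩⟩
  have hone : Fintype.card (MulAction.orbitRel.Quotient (V ≃ₗ[F] V) X) = 1 :=
    have := (MulAction.pretransitive_iff_subsingleton_quotient (V ≃ₗ[F] V) X).1 hpre
    Fintype.card_eq_one_iff.2 ⟨Quotient.mk'' hne.some, fun _ => Subsingleton.elim _ _⟩
  have key := MulAction.sum_card_fixedBy_eq_card_orbits_mul_card_group (V ≃ₗ[F] V) X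
  rw [hone, one_mul, ← Nat.card_eq_fintype_card] at key
  rw [← key, Nat.cast_sum]
  refine sum_congr rfl fun g _ => ?_
  rw [← natCast_card_linearIndependent, ← Nat.card_eq_fintype_card,
    Nat.card_congr (fixedByLinearIndependentTuplesEquiv k g)]

end LinearIndependentTuples

lemma natCast_cardGL {q : ℕ} (hq : 0 < q) (m : ℕ) :
    (cardGL q m : ℝ) = ∏ j ∈ range m, ((q : ℝ) ^ m - (q : ℝ) ^ j) := by
  rw [cardGL, Nat.cast_prod]
  refine prod_congr rfl fun j hj => ?_
  rw [Nat.cast_sub (Nat.pow_le_pow_right hq (mem_range.1 hj).le)]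
  simp

/-- The number of `g ∈ GL(n,q)` with `dim ker(g − id) = i` equals
`(|GL(n,q)|/|GL(i,q)|) · Σ_{k=0}^{n−i} (−1)^k q^{C(k,2)} / (q^{k·i} |GL(k,q)|)`. -/
theorem statement10 (q : ℕ) (hq : IsPrimePow q) (F : Type) [Field F] [Fintype F]
    (hF : Fintype.card F = q) (n i : ℕ) (hi : i ≤ n) :
    (Nat.card {g : GL (Fin n) F //
        Module.finrank F
          (LinearMap.ker (Matrix.mulVecLin ((g : Matrix (Fin n) (Fin n) F) - 1))) = i} : ℝ)
      = ((cardGL q n : ℝ) / (cardGL q i : ℝ)) *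
          ∑ k ∈ Finset.range (n - i + 1),
            (-1 : ℝ) ^ k * (q : ℝ) ^ Nat.choose k 2 / ((q : ℝ) ^ (k * i) * (cardGL q k : ℝ)) := by
  have hq1 : (1 : ℝ) < q := by exact_mod_cast hq.one_lt
  have : Finite ((Fin n → F) ≃ₗ[F] (Fin n → F)) := DFunLike.finite _
  have := Fintype.ofFinite ((Fin n → F) ≃ₗ[F] (Fin n → F))
  let e : GL (Fin n) F ≃* ((Fin n → F) ≃ₗ[F] (Fin n → F)) :=
    Matrix.GeneralLinearGroup.toLin.trans (LinearMap.GeneralLinearGroup.generalLinearEquiv _ _)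
  let d (g : (Fin n → F) ≃ₗ[F] (Fin n → F)) : ℕ :=
    Module.finrank F (LinearMap.ker ((g : (Fin n → F) →ₗ[F] (Fin n → F)) - LinearMap.id))
  have hd (g : GL (Fin n) F) : Module.finrank F
      (LinearMap.ker (Matrix.mulVecLin ((g : Matrix (Fin n) (Fin n) F) - 1))) = d (e g) := by
    have h : Matrix.mulVecLin ((g : Matrix (Fin n) (Fin n) F) - 1) =
        ((e g : (Fin n → F) →ₗ[F] (Fin n → F)) - LinearMap.id) := by
      refine LinearMap.ext fun v => ?_
      simp only [Matrix.mulVecLin_apply, Matrix.sub_mulVec, Matrix.one_mulVec]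
      rfl
    rw [h]
  have hcount : Nat.card {g : GL (Fin n) F // Module.finrank F
      (LinearMap.ker (Matrix.mulVecLin ((g : Matrix (Fin n) (Fin n) F) - 1))) = i} =
      #{g : (Fin n → F) ≃ₗ[F] (Fin n → F) | d g = i} := by
    rw [Nat.card_congr (e.toEquiv.subtypeEquiv (q := fun g => d g = i) fun g => by rw [hd]; rfl),
      Nat.card_eq_fintype_card, Fintype.card_subtype]
  have hdn (g) : d g ≤ n := (Submodule.finrank_le _).trans_eq (by simp)
  have hGL : (Nat.card ((Fin n → F) ≃ₗ[F] (Fin n → F)) : ℝ) = cardGL q n := by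
    rw [← Nat.card_congr e.toEquiv, Matrix.card_GL_field, hF, cardGL,
      Fin.prod_univ_eq_prod_range (fun j => q ^ n - q ^ j)]
  have hmoment (k : ℕ) (hk : k ∈ range (n - i + 1)) :
      (cardGL q n : ℝ) = ∑ g, ∏ j ∈ range (i + k), ((q : ℝ) ^ d g - (q : ℝ) ^ j) := by
    rw [mem_range] at hk
    rw [← hGL, ← sum_prod_pow_finrank_ker_sub_pow (k := i + k) (by simp; omega), hF]
  have hci : (cardGL q i : ℝ) ≠ 0 := by
    rw [natCast_cardGL hq.pos]
    exact prod_ne_zero_iff.2 fun j hj =>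
      (sub_pos.2 (pow_lt_pow_right₀ hq1 (mem_range.1 hj))).ne'
  rw [hcount, div_mul_eq_mul_div, eq_div_iff hci, mul_sum]
  calc (#{g | d g = i} : ℝ) * cardGL q i
      = ∑ g, if d g = i then (cardGL q i : ℝ) else 0 := by
        rw [← sum_filter, sum_const, nsmul_eq_mul]
    _ = ∑ g, ∑ k ∈ range (n - i + 1),
          (-1 : ℝ) ^ k * (q : ℝ) ^ k.choose 2 / ((q : ℝ) ^ (k * i) * (cardGL q k : ℝ)) *
            ∏ j ∈ range (i + k), ((q : ℝ) ^ d g - (q : ℝ) ^ j) := by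
        refine sum_congr rfl fun g _ => ?_
        simp_rw [natCast_cardGL hq.pos]
        exact (sum_alternating_prod_pow_sub_pow (q : ℝ) hq1 (by have := hdn g; omega)).symm
    _ = _ := by
        rw [sum_comm]
        refine sum_congr rfl fun k hk => ?_
        rw [← mul_sum, ← hmoment k hk, mul_comm]
end

section
/- Let q be a prime power and let n, k, ℓ be nonnegative integers with k + ℓ ≤ n. If k ≠ ℓ, then Σ_{g ∈ GL(n,q)} U_k(q^{dim ker(g − id)}) · U_ℓ(q^{dim ker(g − id)}) = 0. If k = ℓ and 2k ≤ n, then Σ_{g ∈ GL(n,q)} U_k(q^{dim ker(g − id)})² = |GL(k,q)| · |GL(n,q)|, where |GL(m,q)| = ∏_{j=0}^{m−1}(q^m − q^j). -/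
/-- The `q`-analogue `[m]_q = 1 + q + ⋯ + q^{m-1}` of the natural number `m`. -/
def qInt (q m : ℕ) : ℕ := ∑ i ∈ Finset.range m, q ^ i

/-- The `q`-factorial `[m]_q! = [m]_q [m-1]_q ⋯ [1]_q`. -/
def qFactorial (q m : ℕ) : ℕ := ∏ i ∈ Finset.range m, qInt q (i + 1)

/-- The Gaussian binomial coefficient `[m choose k]_q = [m]_q! / ([k]_q! [m-k]_q!)`. -/
def qBinom (q m k : ℕ) : ℕ := qFactorial q m / (qFactorial q k * qFactorial q (m - k))

/-- The Al-Salam–Carlitz polynomial (with parameter `a = 1`). -/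
noncomputable def ascU (q k : ℕ) (x : ℝ) : ℝ :=
  ∑ j ∈ Finset.range (k + 1),
    (-1 : ℝ) ^ (k - j) * (q : ℝ) ^ Nat.choose (k - j) 2 * (qBinom q k j : ℝ) *
      ∏ i ∈ Finset.range j, (x - (q : ℝ) ^ i)

/-- `dim ker(g − id)` for `g ∈ GL(n,q)`. -/
noncomputable def dimFix (F : Type) [Field F] [Fintype F] (n : ℕ) (g : GL (Fin n) F) : ℕ :=
  Module.finrank F (LinearMap.ker (Matrix.mulVecLin ((g : Matrix (Fin n) (Fin n) F) - 1)))

theorem qInt_add (q m k : ℕ) : qInt q (m + k) = qInt q m + q ^ m * qInt q k := by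
  rw [qInt, qInt, qInt, Finset.sum_range_add, Finset.mul_sum]
  simp only [pow_add]

theorem qInt_succ_pos (q m : ℕ) : 0 < qInt q (m + 1) := by
  rw [qInt, Finset.sum_range_succ', pow_zero]
  omega

theorem qFactorial_succ (q m : ℕ) : qFactorial q (m + 1) = qFactorial q m * qInt q (m + 1) :=
  Finset.prod_range_succ _ _

theorem qFactorial_pos (q m : ℕ) : 0 < qFactorial q m :=
  Finset.prod_pos fun i _ => qInt_succ_pos q i

/-- The Gaussian binomial coefficients, defined by the `q`-Pascal recursion. -/
def gaussPascal (q : ℕ) : ℕ → ℕ → ℕ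
  | _, 0 => 1
  | 0, _ + 1 => 0
  | m + 1, k + 1 => gaussPascal q m k + q ^ (k + 1) * gaussPascal q m (k + 1)

theorem gaussPascal_zero_right (q m : ℕ) : gaussPascal q m 0 = 1 := by
  cases m <;> rfl

theorem gaussPascal_eq_zero (q : ℕ) {m k : ℕ} (h : m < k) : gaussPascal q m k = 0 := by
  induction m generalizing k with
  | zero => obtain ⟨k, rfl⟩ := Nat.exists_eq_succ_of_ne_zero h.ne'; rfl
  | succ m ih =>
    obtain ⟨k, rfl⟩ := Nat.exists_eq_succ_of_ne_zero (Nat.ne_of_gt (Nat.zero_lt_of_lt h))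
    rw [Nat.succ_eq_add_one, gaussPascal, ih (by omega), ih (by omega), mul_zero, zero_add]

theorem gaussPascal_self (q m : ℕ) : gaussPascal q m m = 1 := by
  induction m with
  | zero => rfl
  | succ m ih => rw [gaussPascal, ih, gaussPascal_eq_zero q (Nat.lt_succ_self m), mul_zero, add_zero]

theorem gaussPascal_mul_qFactorial (q k i : ℕ) :
    gaussPascal q (k + i) k * (qFactorial q k * qFactorial q i) = qFactorial q (k + i) := by
  induction k generalizing i with
  | zero => simp [gaussPascal_zero_right, qFactorial]
  | succ k ihk =>
    induction i with
    | zero => simp [gaussPascal_self, qFactorial]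
    | succ i ihi =>
      have h1 := ihk (i + 1)
      rw [show k + 1 + (i + 1) = (k + 1 + i) + 1 by ring, gaussPascal, qFactorial_succ q (k + 1 + i),
        show k + 1 + i + 1 = (k + 1) + (i + 1) by ring, qInt_add]
      rw [show k + (i + 1) = k + 1 + i by ring] at h1
      calc _ = (gaussPascal q (k + 1 + i) k * (qFactorial q k * qFactorial q (i + 1)))
              * qInt q (k + 1) + q ^ (k + 1) * (gaussPascal q (k + 1 + i) (k + 1) *
                (qFactorial q (k + 1) * qFactorial q i)) * qInt q (i + 1) := by
            rw [qFactorial_succ q k, qFactorial_succ q i]; ring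
        _ = _ := by rw [h1, ihi]; ring

theorem qBinom_eq_gaussPascal (q k i : ℕ) : qBinom q (k + i) k = gaussPascal q (k + i) k := by
  rw [qBinom, Nat.add_sub_cancel_left, ← gaussPascal_mul_qFactorial]
  exact Nat.mul_div_cancel _ (Nat.mul_pos (qFactorial_pos _ _) (qFactorial_pos _ _))

/-- The coefficients of the Al-Salam–Carlitz polynomials in the `q`-factorial basis. -/
def ascCoeff (q : ℝ) : ℕ → ℕ → ℝ
  | 0, 0 => 1
  | 0, _ + 1 => 0
  | k + 1, 0 => -q ^ k * ascCoeff q k 0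
  | k + 1, j + 1 => ascCoeff q k j - q ^ k * ascCoeff q k (j + 1)

theorem ascCoeff_eq_zero (q : ℝ) {k j : ℕ} (h : k < j) : ascCoeff q k j = 0 := by
  induction k generalizing j with
  | zero => obtain ⟨j, rfl⟩ := Nat.exists_eq_succ_of_ne_zero h.ne'; rfl
  | succ k ih =>
    obtain ⟨j, rfl⟩ := Nat.exists_eq_succ_of_ne_zero (Nat.ne_of_gt (Nat.zero_lt_of_lt h))
    rw [Nat.succ_eq_add_one, ascCoeff, ih (by omega), ih (by omega), mul_zero, sub_zero]

theorem ascCoeff_self (q : ℝ) (k : ℕ) : ascCoeff q k k = 1 := by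
  induction k with
  | zero => rfl
  | succ k ih => rw [ascCoeff, ih, ascCoeff_eq_zero q (Nat.lt_succ_self k), mul_zero, sub_zero]

theorem ascCoeff_eq_gaussPascal (q j i : ℕ) :
    ascCoeff q (j + i) j =
      (-1 : ℝ) ^ i * (q : ℝ) ^ Nat.choose i 2 * (gaussPascal q (j + i) j : ℝ) := by
  induction j generalizing i with
  | zero =>
    induction i with
    | zero => simp [ascCoeff, gaussPascal]
    | succ i ih =>
      rw [← add_assoc, ascCoeff, ih, Nat.choose_succ_succ' i 1, Nat.choose_one_right]
      simp only [gaussPascal_zero_right, zero_add]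
      push_cast
      ring
  | succ j ihj =>
    induction i with
    | zero => simp [ascCoeff_self, gaussPascal_self]
    | succ i ihi =>
      have h := ihj (i + 1)
      rw [show j + (i + 1) = j + 1 + i by ring] at h
      rw [← add_assoc, ascCoeff, h, ihi, gaussPascal, Nat.choose_succ_succ' i 1,
        Nat.choose_one_right]
      push_cast
      ring

theorem ascU_eq_sum_ascCoeff (q k : ℕ) (x : ℝ) :
    ascU q k x = ∑ j ∈ Finset.range (k + 1),
      ascCoeff q k j * ∏ i ∈ Finset.range j, (x - (q : ℝ) ^ i) := by
  refine Finset.sum_congr rfl fun j hj => ?_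
  obtain ⟨i, rfl⟩ := Nat.exists_eq_add_of_le (Finset.mem_range_succ_iff.1 hj)
  rw [ascCoeff_eq_gaussPascal, Nat.add_sub_cancel_left, qBinom_eq_gaussPascal]

theorem pow_sub_pow_mul_ascCoeff (q : ℝ) (k j : ℕ) :
    (q ^ (k + 1) - q ^ j) * ascCoeff q (k + 1) j =
      -(q ^ k * (q ^ (k + 1) - 1)) * ascCoeff q k j := by
  induction k generalizing j with
  | zero =>
    match j with
    | 0 => simp [ascCoeff]
    | 1 => simp [ascCoeff]
    | j + 2 => simp [ascCoeff]
  | succ k ih =>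
    cases j with
    | zero =>
      rw [ascCoeff]
      ring
    | succ j =>
      have h1 := ih j
      have h2 := ih (j + 1)
      rw [ascCoeff.eq_4 q (k + 1) j]
      rw [ascCoeff.eq_4 q k j] at h2 ⊢
      linear_combination q * h1 - q ^ (k + 1) * h2

theorem ascU_zero (q : ℕ) (x : ℝ) : ascU q 0 x = 1 := by
  simp [ascU_eq_sum_ascCoeff, ascCoeff]

theorem sum_range_ascCoeff_succ (q : ℝ) (k : ℕ) (f : ℕ → ℝ) :
    ∑ j ∈ Finset.range (k + 2), ascCoeff q (k + 1) j * f j =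
      ∑ j ∈ Finset.range (k + 1), ascCoeff q k j * (f (j + 1) - q ^ k * f j) := by
  have h : ∑ j ∈ Finset.range (k + 1), ascCoeff q k j * f j =
      ∑ j ∈ Finset.range (k + 1), ascCoeff q k (j + 1) * f (j + 1) + ascCoeff q k 0 * f 0 := by
    rw [← Finset.sum_range_succ' (fun j => ascCoeff q k j * f j), Finset.sum_range_succ _ (k + 1),
      ascCoeff_eq_zero q (Nat.lt_succ_self k), zero_mul, add_zero]
  have h' : ∑ j ∈ Finset.range (k + 1), ascCoeff q k j * (f (j + 1) - q ^ k * f j) =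
      ∑ j ∈ Finset.range (k + 1), ascCoeff q k j * f (j + 1) -
        q ^ k * ∑ j ∈ Finset.range (k + 1), ascCoeff q k j * f j := by
    rw [Finset.mul_sum, ← Finset.sum_sub_distrib]
    exact Finset.sum_congr rfl fun j _ => by ring
  have h'' : ∑ j ∈ Finset.range (k + 1), ascCoeff q (k + 1) (j + 1) * f (j + 1) =
      ∑ j ∈ Finset.range (k + 1), ascCoeff q k j * f (j + 1) -
        q ^ k * ∑ j ∈ Finset.range (k + 1), ascCoeff q k (j + 1) * f (j + 1) := by
    rw [Finset.mul_sum, ← Finset.sum_sub_distrib]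
    exact Finset.sum_congr rfl fun j _ => by rw [ascCoeff]; ring
  rw [Finset.sum_range_succ', ascCoeff, h', h, h'']
  ring

theorem ascU_one (q : ℕ) (x : ℝ) : ascU q 1 x = x - 2 := by
  rw [ascU_eq_sum_ascCoeff, sum_range_ascCoeff_succ]
  simp [ascCoeff]
  ring

/-- The three-term recurrence of the Al-Salam–Carlitz polynomials. -/
theorem ascU_add_two (q k : ℕ) (x : ℝ) :
    ascU q (k + 2) x = (x - 2 * (q : ℝ) ^ (k + 1)) * ascU q (k + 1) x -
      (q : ℝ) ^ k * ((q : ℝ) ^ (k + 1) - 1) * ascU q k x := by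
  have h : ascU q k x = ∑ j ∈ Finset.range (k + 2),
      ascCoeff q k j * ∏ i ∈ Finset.range j, (x - (q : ℝ) ^ i) := by
    rw [Finset.sum_range_succ _ (k + 1), ascCoeff_eq_zero _ (Nat.lt_succ_self k), zero_mul,
      add_zero, ascU_eq_sum_ascCoeff]
  rw [h, ascU_eq_sum_ascCoeff, ascU_eq_sum_ascCoeff, sum_range_ascCoeff_succ, Finset.mul_sum,
    Finset.mul_sum, ← Finset.sum_sub_distrib]
  refine Finset.sum_congr rfl fun j _ => ?_
  rw [Finset.prod_range_succ]
  linear_combination (∏ i ∈ Finset.range j, (x - (q : ℝ) ^ i)) * pow_sub_pow_mul_ascCoeff q k j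

section Moments

variable {ι : Type*} [Fintype ι] {q n : ℕ} {y : ι → ℝ} {c : ℝ}

/-- If the first `n` `q`-factorial moments of `y` equal `c`, then the mixed moments of `U_k` against
the `q`-factorial basis are values of the `q`-factorial basis. -/
theorem sum_ascU_mul_prod
    (hy : ∀ j ≤ n, ∑ g, ∏ i ∈ Finset.range j, (y g - (q : ℝ) ^ i) = c) (k m : ℕ)
    (hkm : k + m ≤ n) :
    ∑ g, ascU q k (y g) * ∏ i ∈ Finset.range m, (y g - (q : ℝ) ^ i) =
      c * ∏ i ∈ Finset.range k, ((q : ℝ) ^ m - (q : ℝ) ^ i) := by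
  induction k using Nat.twoStepInduction generalizing m with
  | zero => simpa [ascU_zero] using hy m (by omega)
  | one =>
    have h1 := hy (m + 1) (by omega)
    have h0 := hy m (by omega)
    simp only [Finset.prod_range_succ, Finset.prod_range_zero, ascU_one, one_mul, pow_zero]
      at h1 ⊢
    have h : ∀ g, (y g - 2) * ∏ i ∈ Finset.range m, (y g - (q : ℝ) ^ i) =
        (∏ i ∈ Finset.range m, (y g - (q : ℝ) ^ i)) * (y g - (q : ℝ) ^ m) +
          ((q : ℝ) ^ m - 2) * ∏ i ∈ Finset.range m, (y g - (q : ℝ) ^ i) := fun g => by ring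
    simp only [h, Finset.sum_add_distrib, ← Finset.mul_sum, h0, h1]
    ring
  | more k ih0 ih1 =>
    have h0 := ih0 m (by omega)
    have h1 := ih1 m (by omega)
    have h2 := ih1 (m + 1) (by omega)
    have hshift : ∏ i ∈ Finset.range (k + 1), ((q : ℝ) ^ (m + 1) - (q : ℝ) ^ i) =
        (q : ℝ) ^ k * ((q : ℝ) ^ (m + 1) - 1) *
          ∏ i ∈ Finset.range k, ((q : ℝ) ^ m - (q : ℝ) ^ i) := by
      have h : ∀ i, (q : ℝ) ^ (m + 1) - (q : ℝ) ^ (i + 1) = q * ((q : ℝ) ^ m - (q : ℝ) ^ i) :=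
        fun i => by ring
      simp only [Finset.prod_range_succ', h, Finset.prod_mul_distrib, Finset.prod_const,
        Finset.card_range, pow_zero]
      ring
    rw [hshift] at h2
    have h : ∀ g, ascU q (k + 2) (y g) * ∏ i ∈ Finset.range m, (y g - (q : ℝ) ^ i) =
        ascU q (k + 1) (y g) * ∏ i ∈ Finset.range (m + 1), (y g - (q : ℝ) ^ i) +
        ((q : ℝ) ^ m - 2 * (q : ℝ) ^ (k + 1)) *
          (ascU q (k + 1) (y g) * ∏ i ∈ Finset.range m, (y g - (q : ℝ) ^ i)) -
        (q : ℝ) ^ k * ((q : ℝ) ^ (k + 1) - 1) *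
          (ascU q k (y g) * ∏ i ∈ Finset.range m, (y g - (q : ℝ) ^ i)) := fun g => by
      rw [ascU_add_two, Finset.prod_range_succ]
      ring
    simp only [h, Finset.sum_add_distrib, Finset.sum_sub_distrib, ← Finset.mul_sum, h0, h1, h2]
    simp only [Finset.prod_range_succ]
    ring

theorem sum_ascU_mul_ascU
    (hy : ∀ j ≤ n, ∑ g, ∏ i ∈ Finset.range j, (y g - (q : ℝ) ^ i) = c) {k l : ℕ}
    (hkl : k + l ≤ n) :
    ∑ g, ascU q k (y g) * ascU q l (y g) = ∑ j ∈ Finset.range (l + 1),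
      ascCoeff q l j * (c * ∏ i ∈ Finset.range k, ((q : ℝ) ^ j - (q : ℝ) ^ i)) := by
  simp only [ascU_eq_sum_ascCoeff q l, Finset.mul_sum]
  rw [Finset.sum_comm]
  refine Finset.sum_congr rfl fun j hj => ?_
  have := Finset.mem_range.1 hj
  rw [← sum_ascU_mul_prod hy k j (by omega), Finset.mul_sum]
  exact Finset.sum_congr rfl fun g _ => by ring

theorem sum_ascU_mul_ascU_of_lt
    (hy : ∀ j ≤ n, ∑ g, ∏ i ∈ Finset.range j, (y g - (q : ℝ) ^ i) = c) {k l : ℕ}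
    (hkl : k + l ≤ n) (hlk : l < k) : ∑ g, ascU q k (y g) * ascU q l (y g) = 0 := by
  rw [sum_ascU_mul_ascU hy hkl]
  refine Finset.sum_eq_zero fun j hj => ?_
  have := Finset.mem_range.1 hj
  rw [Finset.prod_eq_zero (i := j) (Finset.mem_range.2 (by omega)) (sub_self _), mul_zero,
    mul_zero]

theorem sum_ascU_sq
    (hy : ∀ j ≤ n, ∑ g, ∏ i ∈ Finset.range j, (y g - (q : ℝ) ^ i) = c) {k : ℕ}
    (hk : 2 * k ≤ n) :
    ∑ g, ascU q k (y g) ^ 2 = c * ∏ i ∈ Finset.range k, ((q : ℝ) ^ k - (q : ℝ) ^ i) := by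
  simp only [pow_two (ascU _ _ _)]
  rw [sum_ascU_mul_ascU hy (by omega), Finset.sum_range_succ, ascCoeff_self, one_mul,
    Finset.sum_eq_zero, zero_add]
  intro j hj
  rw [Finset.prod_eq_zero (i := j) hj (sub_self _), mul_zero, mul_zero]

end Moments

theorem cast_cardGL {q : ℕ} (hq : 0 < q) (m : ℕ) :
    (cardGL q m : ℝ) = ∏ j ∈ Finset.range m, ((q : ℝ) ^ m - (q : ℝ) ^ j) := by
  rw [cardGL, Nat.cast_prod]
  refine Finset.prod_congr rfl fun j hj => ?_
  rw [Nat.cast_sub (Nat.pow_le_pow_right hq (Finset.mem_range.1 hj).le)]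
  push_cast
  rfl

theorem Module.Basis.sumExtend_apply_inl {K V ι : Type*} [DivisionRing K] [AddCommGroup V]
    [Module K V] {v : ι → V} (hs : LinearIndependent K v) (i : ι) :
    Module.Basis.sumExtend hs (Sum.inl i) = v i := by
  simp only [Module.Basis.sumExtend, Module.Basis.reindex_apply, Module.Basis.extend_apply_self]
  rfl

/-- Two linearly independent families with the same finite index type are related by an
automorphism of the ambient finite-dimensional space. -/
theorem LinearIndependent.exists_linearEquiv_apply_eq {K V ι : Type*} [Field K] [AddCommGroup V]
    [Module K V] [FiniteDimensional K V] [Finite ι] {s t : ι → V}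
    (hs : LinearIndependent K s) (ht : LinearIndependent K t) :
    ∃ e : V ≃ₗ[K] V, ∀ i, e (s i) = t i := by
  classical
  let b := Module.Basis.sumExtend hs
  let c := Module.Basis.sumExtend ht
  have hb : ∀ i, b (Sum.inl i) = s i := fun i => Module.Basis.sumExtend_apply_inl hs i
  have hc : ∀ i, c (Sum.inl i) = t i := fun i => Module.Basis.sumExtend_apply_inl ht i
  have : Finite (ι ⊕ Module.Basis.sumExtendIndex hs) := Module.Finite.finite_basis b
  have : Finite (ι ⊕ Module.Basis.sumExtendIndex ht) := Module.Finite.finite_basis c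
  have : Finite (Module.Basis.sumExtendIndex hs) := Finite.sum_right ι
  have : Finite (Module.Basis.sumExtendIndex ht) := Finite.sum_right ι
  have hcard : Nat.card (Module.Basis.sumExtendIndex hs) =
      Nat.card (Module.Basis.sumExtendIndex ht) := by
    have h := (Module.finrank_eq_nat_card_basis b).symm.trans (Module.finrank_eq_nat_card_basis c)
    rw [Nat.card_sum, Nat.card_sum] at h
    omega
  obtain ⟨f⟩ := Finite.card_eq.1 hcard
  refine ⟨b.equiv c (Equiv.sumCongr (Equiv.refl ι) f), fun i => ?_⟩
  rw [← hb, Module.Basis.equiv_apply]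
  exact hc i

/-- The general linear group acts on linearly independent families of vectors. -/
noncomputable instance linearIndependentMulAction (F : Type) [Field F] (n j : ℕ) :
    MulAction (GL (Fin n) F) {s : Fin j → Fin n → F // LinearIndependent F s} where
  smul g s := ⟨fun i => (g : Matrix (Fin n) (Fin n) F).mulVec (s.1 i),
    s.2.map' (Matrix.mulVecLin (g : Matrix (Fin n) (Fin n) F)) (LinearMap.ker_eq_bot.2
      (Matrix.mulVec_injective_of_isUnit g.isUnit))⟩
  one_smul _ := Subtype.ext (funext fun _ => Matrix.one_mulVec _)
  mul_smul g h s := Subtype.ext (funext fun i =>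
    (Matrix.mulVec_mulVec (s.1 i) (g : Matrix (Fin n) (Fin n) F) h).symm)

theorem linearIndependent_smul_apply {F : Type} [Field F] {n j : ℕ} (g : GL (Fin n) F)
    (s : {s : Fin j → Fin n → F // LinearIndependent F s}) (i : Fin j) :
    (g • s).1 i = (g : Matrix (Fin n) (Fin n) F).mulVec (s.1 i) := rfl

instance linearIndependent_isPretransitive (F : Type) [Field F] (n j : ℕ) :
    MulAction.IsPretransitive (GL (Fin n) F)
      {s : Fin j → Fin n → F // LinearIndependent F s} where
  exists_smul_eq s t := by
    obtain ⟨e, he⟩ := s.2.exists_linearEquiv_apply_eq t.2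
    refine ⟨Matrix.GeneralLinearGroup.toLin.symm
      (LinearMap.GeneralLinearGroup.ofLinearEquiv e), Subtype.ext (funext fun i => ?_)⟩
    rw [linearIndependent_smul_apply, ← he]
    exact LinearMap.toMatrix'_mulVec e.toLinearMap (s.1 i)

/-- The families fixed by `g` are the linearly independent families in `ker (g - 1)`. -/
noncomputable def fixedByEquivLinearIndependentKer {F : Type} [Field F] {n : ℕ} (j : ℕ)
    (g : GL (Fin n) F) :
    MulAction.fixedBy {s : Fin j → Fin n → F // LinearIndependent F s} g ≃
      {s : Fin j → LinearMap.ker (Matrix.mulVecLin ((g : Matrix (Fin n) (Fin n) F) - 1)) //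
        LinearIndependent F s} where
  toFun s := ⟨fun i => ⟨s.1.1 i, by
      have h := congrFun (congrArg Subtype.val s.2) i
      rw [linearIndependent_smul_apply] at h
      rw [LinearMap.mem_ker, Matrix.mulVecLin_apply, Matrix.sub_mulVec, h, Matrix.one_mulVec,
        sub_self]⟩,
    LinearIndependent.of_comp (Submodule.subtype _) s.1.2⟩
  invFun s := ⟨⟨fun i => s.1 i, s.2.map' (Submodule.subtype _) (Submodule.ker_subtype _)⟩, by
    refine Subtype.ext (funext fun i => ?_)
    have h := (s.1 i).2
    rw [LinearMap.mem_ker, Matrix.mulVecLin_apply, Matrix.sub_mulVec, Matrix.one_mulVec,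
      sub_eq_zero] at h
    exact h⟩
  left_inv _ := rfl
  right_inv _ := rfl

theorem card_linearIndependent_fin {K V : Type*} [Field K] [AddCommGroup V] [Module K V]
    [Fintype K] [Finite V] (j : ℕ) :
    (Nat.card {s : Fin j → V // LinearIndependent K s} : ℝ) =
      ∏ i ∈ Finset.range j, ((Fintype.card K : ℝ) ^ Module.finrank K V -
        (Fintype.card K : ℝ) ^ i) := by
  by_cases hj : j ≤ Module.finrank K V
  · rw [card_linearIndependent hj, Nat.cast_prod, Finset.prod_range]
    refine Finset.prod_congr rfl fun i _ => ?_
    rw [Nat.cast_sub (Nat.pow_le_pow_right Fintype.card_pos (by omega))]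
    push_cast
    rfl
  · rw [Finset.prod_eq_zero (i := Module.finrank K V) (Finset.mem_range.2 (by omega)) (sub_self _)]
    have : IsEmpty {s : Fin j → V // LinearIndependent K s} :=
      ⟨fun s => hj (by simpa using s.2.fintype_card_le_finrank)⟩
    simp

theorem card_GL_eq_cardGL (F : Type) [Field F] [Fintype F] (n : ℕ) :
    Nat.card (GL (Fin n) F) = cardGL (Fintype.card F) n := by
  rw [Matrix.card_GL_field, cardGL, Finset.prod_range]

/-- The normalized `j`-th `q`-factorial moment of the number of fixed vectors of an element of
`GL (Fin n) F` is `1` for `j ≤ n`. -/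
theorem sum_prod_pow_dimFix_sub (F : Type) [Field F] [Fintype F] [DecidableEq F] {n j : ℕ}
    (hj : j ≤ n) :
    ∑ g : GL (Fin n) F, ∏ i ∈ Finset.range j,
      ((Fintype.card F : ℝ) ^ dimFix F n g - (Fintype.card F : ℝ) ^ i) =
        (cardGL (Fintype.card F) n : ℝ) := by
  classical
  let X := {s : Fin j → Fin n → F // LinearIndependent F s}
  have : Nonempty X :=
    ⟨fun i => Pi.basisFun F (Fin n) (Fin.castLE hj i),
      (Pi.basisFun F (Fin n)).linearIndependent.comp _ (Fin.castLE_injective hj)⟩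
  have hΩ : Fintype.card (Quotient (MulAction.orbitRel (GL (Fin n) F) X)) = 1 := by
    rw [Fintype.card_eq_one_iff_nonempty_unique]
    have := MulAction.pretransitive_iff_subsingleton_quotient (GL (Fin n) F) X |>.1
      (linearIndependent_isPretransitive F n j)
    exact ⟨⟨⟨Quotient.mk _ (Classical.arbitrary X)⟩, fun a => Subsingleton.elim _ _⟩⟩
  have h := MulAction.sum_card_fixedBy_eq_card_orbits_mul_card_group (GL (Fin n) F) X
  rw [hΩ, one_mul, ← Nat.card_eq_fintype_card, card_GL_eq_cardGL] at h
  rw [← h, Nat.cast_sum]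
  refine Finset.sum_congr rfl fun g _ => ?_
  rw [← Nat.card_eq_fintype_card (α := MulAction.fixedBy X g),
    Nat.card_congr (fixedByEquivLinearIndependentKer j g), card_linearIndependent_fin, dimFix]

/-- Orthogonality of the Al-Salam–Carlitz polynomials with respect to the distribution of
the number of fixed points in `GL(n,q)`:
if `k + ℓ ≤ n` and `k ≠ ℓ` then `Σ_{g ∈ GL(n,q)} U_k(q^{dim ker(g−id)}) U_ℓ(q^{dim ker(g−id)}) = 0`,
and if `2k ≤ n` then `Σ_{g ∈ GL(n,q)} U_k(q^{dim ker(g−id)})² = |GL(k,q)|·|GL(n,q)|`. -/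
theorem statement11 (q : ℕ) (hq : IsPrimePow q) (F : Type) [Field F] [Fintype F] [DecidableEq F]
    (hF : Fintype.card F = q) (n k ℓ : ℕ) (hkl : k + ℓ ≤ n) :
    (k ≠ ℓ →
      ∑ g : GL (Fin n) F,
        ascU q k ((q : ℝ) ^ dimFix F n g) * ascU q ℓ ((q : ℝ) ^ dimFix F n g) = 0) ∧
    (k = ℓ → 2 * k ≤ n →
      ∑ g : GL (Fin n) F, (ascU q k ((q : ℝ) ^ dimFix F n g)) ^ 2
        = (cardGL q k : ℝ) * (cardGL q n : ℝ)) := by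
  subst hF
  have hy : ∀ j ≤ n, ∑ g : GL (Fin n) F, ∏ i ∈ Finset.range j,
      ((Fintype.card F : ℝ) ^ dimFix F n g - (Fintype.card F : ℝ) ^ i) =
        (cardGL (Fintype.card F) n : ℝ) := fun j hj => sum_prod_pow_dimFix_sub F hj
  refine ⟨fun hne => ?_, fun _ hk => ?_⟩
  · rcases lt_or_gt_of_ne hne with h | h
    · simp only [mul_comm (ascU _ k _)]
      exact sum_ascU_mul_ascU_of_lt hy (by omega) h
    · exact sum_ascU_mul_ascU_of_lt hy hkl h
  · rw [sum_ascU_sq hy hk, cast_cardGL Fintype.card_pos k, mul_comm]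
end
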